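/- F^{R3}_1 = {(x,X) ∈ ℝ^n × S^n : eᵀx = 1, X = Diag(x), x ≥ 0} = conv{(e^j, e^j(e^j)ᵀ) : j = 1,…,n}, where e^j denotes the j-th unit vector. -/

import Mathlib

open Matrix BigOperators

noncomputable section

def R1Feasible {n : ℕ} (ρ : ℕ) (x u : Fin n → ℝ)
    (X U R : Matrix (Fin n) (Fin n) ℝ) : Prop :=
  X.IsSymm ∧ U.IsSymm ∧
  (∑ i, x i) = 1 ∧
  (∑ i, u i) = (ρ : ℝ) ∧
  (∀ i, x i ≤ u i) ∧
  (∀ i, 0 ≤ x i) ∧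
  (∀ i, U i i = u i) ∧
  (∀ i, (∑ j, X i j) = x i) ∧
  (∀ j, (∑ i, R i j) = u j) ∧
  (∀ i, (∑ j, R i j) = (ρ : ℝ) * x i) ∧
  (∀ i, (∑ j, U i j) = (ρ : ℝ) * u i) ∧
  (∀ i j, 0 ≤ X i j - R j i - R i j + U i j) ∧
  (∀ i j, X i j - R j i ≤ 0) ∧
  (∀ i j, R i j - U i j ≤ 0) ∧
  (∀ i j, 0 ≤ X i j) ∧ (∀ i j, 0 ≤ R i j) ∧ (∀ i j, 0 ≤ U i j)

def FR1proj (n ρ : ℕ) : Set ((Fin n → ℝ) × Matrix (Fin n) (Fin n) ℝ) :=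
  {p | ∃ u U R, R1Feasible ρ p.1 u p.2 U R}

def FR1 (n : ℕ) : Set ((Fin n → ℝ) × Matrix (Fin n) (Fin n) ℝ) :=
  {p | p.2.IsSymm ∧ (∑ i, p.1 i) = 1 ∧ (∀ i, (∑ j, p.2 i j) = p.1 i) ∧
    (∀ i, 0 ≤ p.1 i) ∧ (∀ i j, 0 ≤ p.2 i j)}

def bigMat {n : ℕ} (x u : Fin n → ℝ) (X U R : Matrix (Fin n) (Fin n) ℝ) :
    Matrix (Unit ⊕ (Fin n ⊕ Fin n)) (Unit ⊕ (Fin n ⊕ Fin n)) ℝ :=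
  Matrix.fromBlocks (Matrix.of fun _ _ => (1 : ℝ))
    (Matrix.of fun (_ : Unit) j => Sum.elim x u j)
    (Matrix.of fun i (_ : Unit) => Sum.elim x u i)
    (Matrix.fromBlocks X R Rᵀ U)

def R3Feasible {n : ℕ} (ρ : ℕ) (x u : Fin n → ℝ)
    (X U R : Matrix (Fin n) (Fin n) ℝ) : Prop :=
  R1Feasible ρ x u X U R ∧ (bigMat x u X U R).PosSemidef

def FR3proj (n ρ : ℕ) : Set ((Fin n → ℝ) × Matrix (Fin n) (Fin n) ℝ) :=
  {p | ∃ u U R, R3Feasible ρ p.1 u p.2 U R}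

theorem diag_mem_FR3 {n : ℕ} (x : Fin n → ℝ) (h1 : (∑ i, x i) = 1) (h0 : ∀ i, 0 ≤ x i) :
    R3Feasible 1 x x (Matrix.diagonal x) (Matrix.diagonal x) (Matrix.diagonal x) := by
  have hd : ∀ i j, 0 ≤ Matrix.diagonal x i j := by
    intro i j
    rw [Matrix.diagonal_apply]
    split_ifs
    · exact h0 i
    · exact le_rfl
  have hs : ∀ i j, Matrix.diagonal x i j = Matrix.diagonal x j i := by
    intro i j
    rw [Matrix.diagonal_apply, Matrix.diagonal_apply]
    by_cases h : i = j
    · subst h; rfl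
    · rw [if_neg h, if_neg (Ne.symm h)]
  refine ⟨⟨Matrix.isSymm_diagonal x, Matrix.isSymm_diagonal x, h1, by simpa using h1,
    fun i => le_rfl, h0, ?_, ?_, ?_, ?_, ?_, ?_, ?_, ?_, hd, hd, hd⟩, ?_⟩
  · intro i; simp
  · intro i; simp [Matrix.diagonal_apply]
  · intro i; simp [Matrix.diagonal_apply]
  · intro i; simp [Matrix.diagonal_apply]
  · intro i; simp [Matrix.diagonal_apply]
  · intro i j; rw [hs j i]; linarith
  · intro i j; rw [hs j i]; linarith
  · intro i j; linarith
  · let B : Matrix (Fin n) (Unit ⊕ (Fin n ⊕ Fin n)) ℝ :=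
      Matrix.of fun i => Sum.elim (fun _ => 1)
        (Sum.elim (fun j => if i = j then 1 else 0) (fun j => if i = j then 1 else 0))
    have hD : (Matrix.diagonal x).PosSemidef := Matrix.PosSemidef.diagonal h0
    have hB := hD.conjTranspose_mul_mul_same B
    convert hB using 1
    ext a b
    rw [Matrix.mul_apply]
    simp only [Matrix.mul_diagonal]
    rcases a with _ | a | a <;> rcases b with _ | b | b <;>
      simp [bigMat, B, h1, Matrix.diagonal_apply, eq_comm] <;>
      (by_cases h : a = b <;> simp [h])

theorem FR3_eq (n : ℕ) : FR3proj n 1 =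
      {p : (Fin n → ℝ) × Matrix (Fin n) (Fin n) ℝ |
        (∑ i, p.1 i) = 1 ∧ p.2 = Matrix.diagonal p.1 ∧ ∀ i, 0 ≤ p.1 i} := by
  ext ⟨x, X⟩
  constructor
  · rintro ⟨u, U, R, ⟨-, hUs, hx1, -, -, hx0, hUd, hXr, -, -, hUr, -, hXR, hRU, hX0, -, hU0⟩, -⟩
    refine ⟨hx1, ?_, hx0⟩
    have hU : ∀ i j, j ≠ i → U i j = 0 := by
      intro i j hij
      have h1 := hUr i
      rw [← Finset.add_sum_erase _ _ (Finset.mem_univ i), hUd i] at h1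
      have h2 : ∑ k ∈ Finset.univ.erase i, U i k = 0 := by
        push_cast at h1; linarith
      exact (Finset.sum_eq_zero_iff_of_nonneg (fun k _ => hU0 i k)).1 h2 j (by simp [hij])
    have hX : ∀ i j, j ≠ i → X i j = 0 := by
      intro i j hij
      have a := hXR i j
      have b := hRU j i
      have c := hU j i hij.symm
      have d := hX0 i j
      simp only at a d
      linarith
    ext i j
    by_cases h : i = j
    · subst h
      have := hXr i
      rw [Finset.sum_eq_single i (fun k _ hk => hX i k hk) (by simp)] at this
      simpa using this
    · rw [Matrix.diagonal_apply_ne _ h]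
      exact hX i j (Ne.symm h)
  · rintro ⟨h1, h2, h0⟩
    simp only at h1 h2 h0
    subst h2
    exact ⟨x, _, _, diag_mem_FR3 x h1 h0⟩

theorem stmt13 {n : ℕ} (hn : 0 < n) :
    FR3proj n 1 =
      {p : (Fin n → ℝ) × Matrix (Fin n) (Fin n) ℝ |
        (∑ i, p.1 i) = 1 ∧ p.2 = Matrix.diagonal p.1 ∧ ∀ i, 0 ≤ p.1 i} ∧
    FR3proj n 1 =
      convexHull ℝ
        {p : (Fin n → ℝ) × Matrix (Fin n) (Fin n) ℝ |
          ∃ j : Fin n, p = ((Pi.single j 1 : Fin n → ℝ),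
            Matrix.vecMulVec (Pi.single j 1) (Pi.single j 1))} := by
  refine ⟨FR3_eq n, ?_⟩
  rw [FR3_eq n]
  apply Set.Subset.antisymm
  · rintro ⟨x, X⟩ ⟨h1, h2, h0⟩
    simp only at h1 h2 h0
    subst h2
    have hsum : ((x, Matrix.diagonal x) : (Fin n → ℝ) × Matrix (Fin n) (Fin n) ℝ) =
        ∑ j, x j • ((Pi.single j 1 : Fin n → ℝ),
          (Matrix.vecMulVec (Pi.single j 1) (Pi.single j 1) : Matrix (Fin n) (Fin n) ℝ)) := by
      refine Prod.ext ?_ ?_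
      · rw [Prod.fst_sum]
        ext i
        simp [Finset.sum_apply, Pi.single_apply]
      · rw [Prod.snd_sum]
        ext i k
        rw [Matrix.sum_apply]
        simp [Matrix.vecMulVec_apply, Pi.single_apply, Matrix.diagonal_apply]
        split_ifs with h
        · rw [h]
        · rfl
    rw [hsum]
    exact (convex_convexHull ℝ _).sum_mem (fun i _ => h0 i) h1
      (fun j _ => subset_convexHull ℝ _ ⟨j, rfl⟩)
  · apply convexHull_min
    · rintro _ ⟨j, rfl⟩
      refine ⟨by simp, ?_, ?_⟩
      · ext i k
        by_cases h : i = k <;> by_cases h' : i = j <;> by_cases h'' : k = j <;>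
          simp_all [Matrix.vecMulVec_apply, Pi.single_apply, Matrix.diagonal_apply]
      · intro i
        simp only [Pi.single_apply]
        split_ifs <;> norm_num
    · rintro ⟨x, X⟩ ⟨h1, h2, h0⟩ ⟨y, Y⟩ ⟨k1, k2, k0⟩ a b ha hb hab
      simp only at h1 h2 h0 k1 k2 k0
      subst h2 k2
      refine ⟨?_, ?_, ?_⟩
      · simp [Finset.sum_add_distrib, ← Finset.mul_sum, h1, k1, hab]
      · ext i k
        by_cases h : i = k
        · subst h; simp
        · simp [h]
      · intro i
        have := mul_nonneg ha (h0 i)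
        have := mul_nonneg hb (k0 i)
        simp
        linarith

end
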